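/- Let n be a positive integer, let λ = (λ_1,…,λ_r) and μ = (μ_1,…,μ_s) be compositions of n with associated blocks Y_i(λ), Y_j(μ) and Young subgroups S_λ, S_μ ≤ S_n, and let σ ∈ S_n. Set γ_{ij} := card(σ(Y_i(λ)) ∩ Y_j(μ)). Then the double coset S_μ σ S_λ = {τ₁ σ τ₂ : τ₁ ∈ S_μ, τ₂ ∈ S_λ} consists of exactly λ! μ! / γ! elements, where λ! = λ_1!⋯λ_r!, μ! = μ_1!⋯μ_s!, and γ! = ∏_{i,j} γ_{ij}!. -/

import Mathlib

/-- The `i`-th consecutive block of `{0, …, n-1}` (0-indexed version of `{1, …, n}`)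
associated to a composition `lam = (lam 0, …, lam (r-1))` of `n`. -/
def blockSet (n : ℕ) {r : ℕ} (lam : Fin r → ℕ) (i : Fin r) : Finset (Fin n) :=
  Finset.univ.filter fun x : Fin n =>
    (∑ i' ∈ Finset.Iio i, lam i') ≤ (x : ℕ) ∧ (x : ℕ) < ∑ i' ∈ Finset.Iic i, lam i'

/-!
Letting `H` act on `G ⧸ K`, orbit–stabilizer gives `|H a K| * |a K a⁻¹ ∩ H| = |H| * |K|`.
For Young subgroups, `σ S_λ σ⁻¹` stabilizes the blocks `σ(Y_i(λ))`, so its intersection with `S_μ`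
is again a Young subgroup, that of the common refinement with blocks `σ(Y_i(λ)) ∩ Y_j(μ)`.
-/

section DoubleCoset

open DoubleCoset MulAction
open scoped Pointwise

variable {G : Type*} [Group G] (H K : Subgroup G) (a : G)

theorem stabilizer_quotient_mk_eq_subgroupOf :
    stabilizer H (a : G ⧸ K) = (MulAut.conj a • K).subgroupOf H := by
  have hsmul : (a : G ⧸ K) = a • ((1 : G) : G ⧸ K) := by
    rw [Quotient.smul_mk, smul_eq_mul, mul_one]
  have hstab : stabilizer G (a : G ⧸ K) = MulAut.conj a • K := by
    rw [hsmul, stabilizer_smul_eq_stabilizer_map_conj, stabilizer_quotient]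
    rfl
  rw [← hstab]
  rfl

theorem card_doubleCoset_eq_card_mul_card_orbit :
    Nat.card (doubleCoset a (H : Set G) K) =
      Nat.card K * Nat.card (orbit H (a : G ⧸ K)) := by
  have horbit : ((↑) : G → G ⧸ K) '' ((H : Set G) * {a}) = orbit H (a : G ⧸ K) := by
    rw [Set.mul_singleton, Set.image_image, Set.image_eq_range]
    rfl
  rw [doubleCoset, Subgroup.card_mul_eq_card_subgroup_mul_card_quotient, horbit]

theorem card_doubleCoset_mul_card_conj_inf :
    Nat.card (doubleCoset a (H : Set G) K) *
        Nat.card (MulAut.conj a • K ⊓ H : Subgroup G) =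
      Nat.card H * Nat.card K := by
  have hcard : Nat.card (orbit H (a : G ⧸ K)) *
      Nat.card (MulAut.conj a • K ⊓ H : Subgroup G) = Nat.card H := by
    rw [Nat.card_coe_set_eq, ← index_stabilizer, stabilizer_quotient_mk_eq_subgroupOf,
      ← Subgroup.inf_subgroupOf_right, mul_comm, ← Subgroup.relIndex_bot_left,
      ← Subgroup.relIndex_bot_left]
    exact Subgroup.relIndex_mul_relIndex _ _ _ bot_le inf_le_right
  rw [card_doubleCoset_eq_card_mul_card_orbit, mul_assoc, hcard, mul_comm]

end DoubleCoset

section YoungSubgroup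

open Equiv Finset MulAction
open scoped Nat Pointwise

variable {α ι κ : Type*} [DecidableEq α]

/-- The Young subgroup of a family `A` of finite sets: the permutations mapping every `A i` onto
itself. The family is arbitrary here; that it partitions `α` is a hypothesis
`∀ x, ∃! i, x ∈ A i` of the lemmas that need it, which allows empty blocks. -/
def youngSubgroup (A : ι → Finset α) : Subgroup (Perm α) :=
  ⨅ i, stabilizer (Perm α) (A i)

theorem mem_youngSubgroup {A : ι → Finset α} {τ : Perm α} :
    τ ∈ youngSubgroup A ↔ ∀ i, (A i).image τ = A i := by
  simp only [youngSubgroup, Subgroup.mem_iInf, mem_stabilizer_iff]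
  rfl

theorem mem_youngSubgroup_iff_apply_mem {A : ι → Finset α} {τ : Perm α} :
    τ ∈ youngSubgroup A ↔ ∀ i x, τ x ∈ A i ↔ x ∈ A i := by
  simp only [youngSubgroup, Subgroup.mem_iInf, mem_stabilizer_finset, Perm.smul_def]

theorem conj_smul_youngSubgroup (σ : Perm α) (A : ι → Finset α) :
    MulAut.conj σ • youngSubgroup A = youngSubgroup fun i ↦ (A i).image σ := by
  have hstab (s : Finset α) : stabilizer (Perm α) (s.image σ) =
      (stabilizer (Perm α) s).map (MulAut.conj σ).toMonoidHom :=
    stabilizer_smul_eq_stabilizer_map_conj σ s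
  ext τ
  simp only [youngSubgroup, hstab, Subgroup.mem_pointwise_smul_iff_inv_smul_mem,
    Subgroup.mem_iInf, Subgroup.mem_map_equiv]
  rfl

theorem youngSubgroup_inf_youngSubgroup {A : ι → Finset α} {B : κ → Finset α}
    (hA : ∀ x, ∃ i, x ∈ A i) (hB : ∀ x, ∃ j, x ∈ B j) :
    youngSubgroup A ⊓ youngSubgroup B = youngSubgroup fun p : ι × κ ↦ A p.1 ∩ B p.2 := by
  ext τ
  simp only [Subgroup.mem_inf, mem_youngSubgroup_iff_apply_mem, mem_inter, Prod.forall]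
  refine ⟨fun ⟨hτA, hτB⟩ i j x ↦ and_congr (hτA i x) (hτB j x), fun hτ ↦ ⟨?_, ?_⟩⟩
  · intro i x
    obtain ⟨j, hj⟩ := hB x
    obtain ⟨j', hj'⟩ := hB (τ x)
    exact ⟨fun hi ↦ ((hτ i j' x).1 ⟨hi, hj'⟩).1, fun hi ↦ ((hτ i j x).2 ⟨hi, hj⟩).1⟩
  · intro j x
    obtain ⟨i, hi⟩ := hA x
    obtain ⟨i', hi'⟩ := hA (τ x)
    exact ⟨fun hj ↦ ((hτ i' j x).1 ⟨hi', hj⟩).2, fun hj ↦ ((hτ i j x).2 ⟨hi, hj⟩).2⟩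

theorem card_youngSubgroup [Finite α] [Fintype ι] {A : ι → Finset α}
    (hA : ∀ x, ∃! i, x ∈ A i) :
    Nat.card (youngSubgroup A) = ∏ i, (#(A i))! := by
  choose f hf hf_unique using hA
  have mem_iff (x i) : x ∈ A i ↔ f x = i := ⟨fun hx ↦ (hf_unique x i hx).symm, fun h ↦ h ▸ hf x⟩
  have coe_eq : (youngSubgroup A : Set (Perm α)) = {τ : Perm α | f ∘ τ = f} := by
    ext τ
    simp only [SetLike.mem_coe, mem_youngSubgroup_iff_apply_mem, mem_iff, Set.mem_ofPred_eq,
      funext_iff, Function.comp_apply]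
    exact ⟨fun h x ↦ (h (f x) x).2 rfl, fun h i x ↦ by rw [h x]⟩
  have fiber_eq (i) : {x | f x = i} = (A i : Set α) := by
    ext x
    exact (mem_iff x i).symm
  rw [← SetLike.coe_sort_coe, Nat.card_coe_set_eq, coe_eq, DomMulAct.stabilizer_ncard]
  simp only [fiber_eq, Set.ncard_coe_finset]

theorem existsUnique_mem_image {A : ι → Finset α} (hA : ∀ x, ∃! i, x ∈ A i) (σ : Perm α) (x : α) :
    ∃! i, x ∈ (A i).image σ := by
  have mem_iff (i) : σ⁻¹ x ∈ A i ↔ x ∈ (A i).image σ :=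
    inv_smul_mem_iff (a := σ) (b := x) (s := A i)
  simpa only [mem_iff] using hA (σ⁻¹ x)

theorem existsUnique_mem_inter {A : ι → Finset α} {B : κ → Finset α}
    (hA : ∀ x, ∃! i, x ∈ A i) (hB : ∀ x, ∃! j, x ∈ B j) (x : α) :
    ∃! p : ι × κ, x ∈ A p.1 ∩ B p.2 := by
  obtain ⟨i, hi, hi_unique⟩ := hA x
  obtain ⟨j, hj, hj_unique⟩ := hB x
  refine ⟨(i, j), mem_inter.2 ⟨hi, hj⟩, fun p hp ↦ ?_⟩
  exact Prod.ext (hi_unique _ (mem_inter.1 hp).1) (hj_unique _ (mem_inter.1 hp).2)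

theorem double_coset_card_general [Finite α] [Fintype ι] [Fintype κ]
    {A : ι → Finset α} {B : κ → Finset α}
    (hA : ∀ x, ∃! i, x ∈ A i) (hB : ∀ x, ∃! j, x ∈ B j) (σ : Perm α) :
    Nat.card {π : Perm α // ∃ τ₁ τ₂ : Perm α,
        (∀ j, (B j).image τ₁ = B j) ∧ (∀ i, (A i).image τ₂ = A i) ∧ π = τ₁ * σ * τ₂} *
      ∏ i, ∏ j, (#((A i).image σ ∩ B j))! =
    (∏ i, (#(A i))!) * ∏ j, (#(B j))! := by
  have hσA := existsUnique_mem_image hA σ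
  have hinf : MulAut.conj σ • youngSubgroup A ⊓ youngSubgroup B =
      youngSubgroup fun p : ι × κ ↦ (A p.1).image σ ∩ B p.2 := by
    rw [conj_smul_youngSubgroup,
      youngSubgroup_inf_youngSubgroup (fun x ↦ (hσA x).exists) fun x ↦ (hB x).exists]
  have hcoset : DoubleCoset.doubleCoset σ (youngSubgroup B : Set (Perm α)) (youngSubgroup A) =
      {π | ∃ τ₁ τ₂ : Perm α,
        (∀ j, (B j).image τ₁ = B j) ∧ (∀ i, (A i).image τ₂ = A i) ∧ π = τ₁ * σ * τ₂} := by
    ext π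
    simp only [DoubleCoset.mem_doubleCoset, SetLike.mem_coe, mem_youngSubgroup, Set.mem_ofPred_eq,
      exists_and_left]
  have hcard := card_doubleCoset_mul_card_conj_inf (youngSubgroup B) (youngSubgroup A) σ
  rw [hinf, hcoset, card_youngSubgroup (existsUnique_mem_inter hσA hB), card_youngSubgroup hA,
    card_youngSubgroup hB, Fintype.prod_prod_type, mul_comm (∏ j, _)] at hcard
  exact hcard

end YoungSubgroup

section BlockSet

open Finset

variable {n r : ℕ} {lam : Fin r → ℕ}

theorem card_blockSet (hsum : ∑ i, lam i ≤ n) (i : Fin r) : #(blockSet n lam i) = lam i := by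
  have hIic : ∑ i' ∈ Iic i, lam i' ≤ n :=
    (sum_le_univ_sum_of_nonneg fun _ ↦ Nat.zero_le _).trans hsum
  have hIco : blockSet n lam i = (Ico (∑ i' ∈ Iio i, lam i') (∑ i' ∈ Iic i, lam i')).attachFin
      fun _ hx ↦ (mem_Ico.1 hx).2.trans_le hIic := by
    ext x
    simp only [blockSet, mem_filter_univ, mem_attachFin, mem_Ico]
  rw [hIco, card_attachFin, Nat.card_Ico, ← sum_Iio_add_eq_sum_Iic, Nat.add_sub_cancel_left]

theorem pairwise_disjoint_blockSet (n : ℕ) (lam : Fin r → ℕ) :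
    Pairwise (Function.onFun Disjoint (blockSet n lam)) := by
  refine (pairwise_disjoint_on _).2 fun i j hij ↦ disjoint_left.2 fun x hxi hxj ↦ ?_
  simp only [blockSet, mem_filter_univ] at hxi hxj
  have hle : ∑ i' ∈ Iic i, lam i' ≤ ∑ i' ∈ Iio j, lam i' :=
    sum_le_sum_of_subset fun k hk ↦ mem_Iio.2 ((mem_Iic.1 hk).trans_lt hij)
  exact (hxi.2.trans_le (hle.trans hxj.1)).false

theorem existsUnique_mem_blockSet (hsum : ∑ i, lam i = n) (x : Fin n) :
    ∃! i, x ∈ blockSet n lam i := by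
  have hdisj := pairwise_disjoint_blockSet n lam
  have hcover : univ.biUnion (blockSet n lam) = univ := by
    rw [← card_eq_iff_eq_univ, card_biUnion (hdisj.set_pairwise _), Fintype.card_fin]
    simpa only [card_blockSet hsum.le] using hsum
  obtain ⟨i, -, hi⟩ := mem_biUnion.1 (hcover ▸ mem_univ x)
  exact ⟨i, hi, fun j hj ↦ hdisj.eq (not_disjoint_iff.2 ⟨x, hj, hi⟩)⟩

end BlockSet

/-- The double coset `S_μ σ S_λ` consists of exactly `λ! μ! / γ!` elements, i.e.
`card (S_μ σ S_λ) ⬝ ∏_{i,j} γ_{ij}! = λ! ⬝ μ!`, where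
`γ_{ij} = card (σ(Y_i(λ)) ∩ Y_j(μ))`. -/
theorem double_coset_card (n r s : ℕ) (hn : 0 < n)
    (lam : Fin r → ℕ) (mu : Fin s → ℕ)
    (hlampos : ∀ i, 0 < lam i) (hmupos : ∀ j, 0 < mu j)
    (hlamsum : ∑ i, lam i = n) (hmusum : ∑ j, mu j = n)
    (σ : Equiv.Perm (Fin n)) :
    Nat.card {π : Equiv.Perm (Fin n) // ∃ τ₁ τ₂ : Equiv.Perm (Fin n),
        (∀ j, (blockSet n mu j).image ⇑τ₁ = blockSet n mu j) ∧
        (∀ i, (blockSet n lam i).image ⇑τ₂ = blockSet n lam i) ∧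
        π = τ₁ * σ * τ₂} *
      ∏ i : Fin r, ∏ j : Fin s,
        Nat.factorial (((blockSet n lam i).image ⇑σ ∩ blockSet n mu j).card) =
    (∏ i, Nat.factorial (lam i)) * ∏ j, Nat.factorial (mu j) := by
  simpa only [card_blockSet hlamsum.le, card_blockSet hmusum.le] using
    double_coset_card_general (existsUnique_mem_blockSet hlamsum)
      (existsUnique_mem_blockSet hmusum) σ
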